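/- arXiv:2302.05322 — 2 statements merged into one kernel-verified Lean document; each statement's English description precedes it below -/
import Mathlib

section
/- Fix a real number α > 0. There exists a constant C = C(α) > 0 such that for every integer K ≥ 1 and every ε with 0 < ε < 1 there exists a tanh-MLP network D̃ : ℝ^{1+K} → ℝ^K whose total number of weights is at most C·(K³ + K·(log(1/ε))²) and which satisfies, for all inputs t ∈ [0,1] and c₁,…,c_K ∈ [−1,1], the uniform bound max_{1 ≤ k ≤ K} | D̃(t, c₁, …, c_K)_k − e^{−4π²k²αt} c_k | ≤ ε. -/
/-!
A single `tanh` neuron far out on its left tail is an exponential: since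
`tanh y = -1 + 2 e^{2y} / (1 + e^{2y})`, the rescaled neuron `e^{2M} (tanh (x - M) + 1) / 2` tends to
`e^{2x}` as `M → ∞`, uniformly for `x` bounded above (`abs_shifted_tanh_sub_exp_le`). A difference
quotient of the exponential in a direction `h c` then produces the product `e^{2u} c`:
`(e^{2(u + h c)} - e^{2u}) / (2h) → e^{2u} c` as `h → 0`. Hence two neurons suffice to approximate
`e^{2u} c` to any accuracy, uniformly in `u ≤ 0` and `|c| ≤ 1` (`exists_two_neuron_product`).
Taking `u = -2π²k²αt` for each mode `k` gives a network with one hidden layer of width `2K`, whose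
`4K² + 5K ≤ 9K³` weights do not depend in number on `ε`; their magnitudes do, which is
harmless because only the entries are counted.
-/

open Real

/-- A multi-layer perceptron with `tanh` activations: a composition
`L_m ∘ σ ∘ L_{m-1} ∘ σ ∘ ⋯ ∘ σ ∘ L₁` of affine layers `L_j v = M_j v + b_j`
with coordinatewise `tanh` nonlinearities between them (none after the last layer). -/
inductive TanhMLP : ℕ → ℕ → Type
  | last {n m : ℕ} (M : Matrix (Fin m) (Fin n) ℝ) (b : Fin m → ℝ) : TanhMLP n m
  | layer {n k m : ℕ} (M : Matrix (Fin k) (Fin n) ℝ) (b : Fin k → ℝ)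
      (rest : TanhMLP k m) : TanhMLP n m

/-- Evaluation of a tanh-MLP network. -/
noncomputable def TanhMLP.eval : {n m : ℕ} → TanhMLP n m → (Fin n → ℝ) → Fin m → ℝ
  | _, _, .last M b, v => fun i => M.mulVec v i + b i
  | _, _, .layer M b rest, v => rest.eval fun i => Real.tanh (M.mulVec v i + b i)

/-- Total number of weights (entries of all matrices and bias vectors). -/
def TanhMLP.weights : {n m : ℕ} → TanhMLP n m → ℕ
  | n, m, .last _ _ => m * n + m
  | n, _, .layer (k := k) _ _ rest => k * n + k + rest.weights

/-- On its left tail, `tanh` is an exponential up to a relative error `e^{2(x - M)}`. -/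
lemma abs_shifted_tanh_sub_exp_le (x M : ℝ) :
    |(Real.tanh (x - M) + 1) / (2 * Real.exp (-2 * M)) - Real.exp (2 * x)| ≤
      Real.exp (-2 * M) * Real.exp (2 * x) ^ 2 := by
  have hp := Real.exp_pos (2 * x)
  have hq := Real.exp_pos (-2 * M)
  have hpq : Real.exp (x - M) * Real.exp (x - M) = Real.exp (2 * x) * Real.exp (-2 * M) := by
    rw [← Real.exp_add, ← Real.exp_add]; ring_nf
  have htanh : Real.tanh (x - M) =
      (Real.exp (2 * x) * Real.exp (-2 * M) - 1) / (Real.exp (2 * x) * Real.exp (-2 * M) + 1) := by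
    rw [← hpq, Real.tanh_eq, Real.exp_neg]
    have := Real.exp_pos (x - M)
    field_simp
  rw [htanh]
  generalize Real.exp (2 * x) = p at *
  generalize Real.exp (-2 * M) = q at *
  have hpq0 : 0 < p * q := mul_pos hp hq
  have hdiff : ((p * q - 1) / (p * q + 1) + 1) / (2 * q) - p = -(q * p ^ 2 / (p * q + 1)) := by
    field_simp
    ring
  rw [hdiff, abs_neg, abs_of_nonneg (by positivity)]
  exact div_le_self (by positivity) (by linarith)

/-- Two neurons approximate `(u, c) ↦ e^{2u} c`, uniformly on `u ≤ 0`, `|c| ≤ 1`. -/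
lemma exists_two_neuron_product (ε : ℝ) (hε : 0 < ε) (hε1 : ε < 1) :
    ∃ h M s : ℝ, ∀ u ≤ (0 : ℝ), ∀ c ∈ Set.Icc (-1 : ℝ) 1,
      |s * (Real.tanh (u + h * c - M) - Real.tanh (u - M)) - Real.exp (2 * u) * c| ≤ ε := by
  -- The difference quotient costs at most `2h = ε / 2`, and the two tail errors together at most
  -- `δ e² / h = ε / 2`, where `δ = e^{-2M}`.
  obtain ⟨h, hh⟩ : ∃ h : ℝ, h = ε / 4 := ⟨_, rfl⟩
  have hpos : 0 < h := by linarith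
  have hE : 0 < Real.exp 1 := Real.exp_pos 1
  obtain ⟨δ, hδ⟩ : ∃ δ : ℝ, δ = h * ε / (2 * Real.exp 1 ^ 2) := ⟨_, rfl⟩
  have hδpos : 0 < δ := by rw [hδ]; positivity
  refine ⟨h, -Real.log δ / 2, 1 / (4 * h * δ), fun u hu c hc => ?_⟩
  have hM : Real.exp (-2 * (-Real.log δ / 2)) = δ := by
    rw [show -2 * (-Real.log δ / 2) = Real.log δ by ring, Real.exp_log hδpos]
  have tail : ∀ x : ℝ, 2 * x ≤ 1 →
      |(Real.tanh (x - -Real.log δ / 2) + 1) / (2 * δ) - Real.exp (2 * x)| ≤ h * ε / 2 := by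
    intro x hx
    have h1 := abs_shifted_tanh_sub_exp_le x (-Real.log δ / 2)
    rw [hM] at h1
    refine h1.trans ?_
    have h2 : Real.exp (2 * x) ^ 2 ≤ Real.exp 1 ^ 2 := by gcongr
    calc δ * Real.exp (2 * x) ^ 2 ≤ δ * Real.exp 1 ^ 2 := by gcongr
      _ = h * ε / 2 := by rw [hδ]; field_simp
  have hcabs : |c| ≤ 1 := abs_le.2 hc
  have hhc : |h * c| ≤ h := by
    rw [abs_mul, abs_of_pos hpos]; nlinarith
  have hhc' := abs_le.1 hhc
  have t1 := tail (u + h * c) (by linarith)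
  have t2 := tail u (by linarith)
  have hq : |Real.exp (2 * (u + h * c)) - Real.exp (2 * u) - Real.exp (2 * u) * (2 * (h * c))| ≤
      4 * h ^ 2 := by
    have h3 := Real.abs_exp_sub_one_sub_id_le (x := 2 * (h * c)) (by
      rw [abs_le]; constructor <;> linarith)
    have h4 : Real.exp (2 * u) ≤ 1 := Real.exp_le_one_iff.2 (by linarith)
    have h5 : (2 * (h * c)) ^ 2 ≤ 4 * h ^ 2 := by nlinarith
    rw [show 2 * (u + h * c) = 2 * u + 2 * (h * c) by ring, Real.exp_add,
      show ∀ p q r : ℝ, p * q - p - p * r = p * (q - 1 - r) by intros; ring, abs_mul, Real.abs_exp]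
    calc _ ≤ 1 * (4 * h ^ 2) :=
          mul_le_mul h4 (h3.trans h5) (abs_nonneg _) zero_le_one
      _ = _ := one_mul _
  generalize Real.tanh (u + h * c - -Real.log δ / 2) = T at *
  generalize Real.tanh (u - -Real.log δ / 2) = S at *
  have key : 1 / (4 * h * δ) * (T - S) - Real.exp (2 * u) * c =
      (((T + 1) / (2 * δ) - Real.exp (2 * (u + h * c))) - ((S + 1) / (2 * δ) - Real.exp (2 * u)) +
        (Real.exp (2 * (u + h * c)) - Real.exp (2 * u) - Real.exp (2 * u) * (2 * (h * c))))
        / (2 * h) := by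
    field_simp
    ring
  rw [key, abs_div, abs_of_pos (by positivity : 0 < 2 * h), div_le_iff₀ (by positivity)]
  have h6 : 4 * h ^ 2 = h * ε := by rw [hh]; ring
  rw [abs_le] at *
  constructor <;> linarith [t1.1, t1.2, t2.1, t2.2, hq.1, hq.2]

/-- For every `α > 0` there is a constant `C > 0` such that for every `K ≥ 1` and
`0 < ε < 1` there is a tanh-MLP network `D̃ : ℝ^{1+K} → ℝ^K` with at most
`C (K³ + K log²(1/ε))` weights satisfying
`|D̃(t,c₁,…,c_K)_k − e^{−4π²k²αt} c_k| ≤ ε` for all `t ∈ [0,1]`, `c_k ∈ [−1,1]`. -/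
theorem time_stepping_block_approximation (α : ℝ) (hα : 0 < α) :
    ∃ C : ℝ, 0 < C ∧
      ∀ K : ℕ, 1 ≤ K → ∀ ε : ℝ, 0 < ε → ε < 1 →
        ∃ net : TanhMLP (K + 1) K,
          (net.weights : ℝ) ≤ C * ((K : ℝ) ^ 3 + (K : ℝ) * (Real.log (1 / ε)) ^ 2) ∧
          ∀ t ∈ Set.Icc (0 : ℝ) 1, ∀ c : Fin K → ℝ,
            (∀ k, c k ∈ Set.Icc (-1 : ℝ) 1) →
            ∀ k : Fin K,
              |net.eval (Fin.cons t c) k -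
                Real.exp (-(4 * π ^ 2 * (((k : ℕ) : ℝ) + 1) ^ 2 * α * t)) * c k| ≤ ε := by
  refine ⟨9, by norm_num, fun K hK ε hε hε1 => ?_⟩
  obtain ⟨h, M, s, hs⟩ := exists_two_neuron_product ε hε hε1
  let a : Fin K → ℝ := fun k => -(2 * π ^ 2 * (((k : ℕ) : ℝ) + 1) ^ 2 * α)
  -- For each mode `k` the hidden layer holds the two neurons with arguments `aₖ t + h cₖ - M`
  -- and `aₖ t - M`; the output layer takes `s` times their difference.
  refine ⟨.layer (k := K + K)
    (Matrix.of (Fin.append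
      (fun k => Fin.cons (a k) (fun j => if j = k then h else 0))
      (fun k => Fin.cons (a k) (fun _ => 0))))
    (fun _ => -M)
    (.last (Matrix.of fun k => Fin.append
      (fun j => if j = k then s else 0) (fun j => if j = k then -s else 0)) (fun _ => 0)),
    ?_, ?_⟩
  · have hK' : (1 : ℝ) ≤ K := by exact_mod_cast hK
    have hlog : 0 ≤ (K : ℝ) * Real.log (1 / ε) ^ 2 := by positivity
    simp only [TanhMLP.weights]
    push_cast
    nlinarith [mul_nonneg (sub_nonneg.2 hK') (sub_nonneg.2 hK'),
      mul_nonneg (sq_nonneg (K : ℝ)) (sub_nonneg.2 hK')]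
  · intro t ht c hc k
    have hu : a k * t ≤ 0 := mul_nonpos_of_nonpos_of_nonneg
      (neg_nonpos.2 (by positivity)) ht.1
    have hmain := hs (a k * t) hu (c k) (hc k)
    have hexp : -(4 * π ^ 2 * (((k : ℕ) : ℝ) + 1) ^ 2 * α * t) = 2 * (a k * t) := by
      simp only [a]; ring
    rw [hexp]
    convert hmain using 3
    simp [TanhMLP.eval, Matrix.mulVec, dotProduct, Fin.sum_univ_add, Fin.sum_univ_succ,
      Fin.append_left, Fin.append_right, -Fin.natAdd_eq_addNat]
    ring_nf
end

section
/- Fix a real number A > 0. There exists a constant C = C(A) > 0 such that for every integer K ≥ 1 and every ε with 0 < ε < 1 there exists a tanh-MLP network R̃ : ℝ^{K+1} → ℝ whose total number of weights is at most C·(K² + K·(log(K/ε))²) and which satisfies | R̃(a₁, …, a_K, x) − Σ_{k=1}^{K} a_k sin(2πkx) | ≤ ε for all a₁, …, a_K ∈ [−A, A] and all x ∈ [0,1]. -/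
/-!
A `tanh` network with two hidden layers, of widths `n + K` and `3K` with `n = O(K + log (K/ε))`,
suffices; it has `O(K² + K log (K/ε))` weights. Since only the number of weights matters, and not
their size, two limits are available at no cost.

* `tanh` neurons approximate exponentials: `e^z / (1 + t² e^z)` is an affine image of
  `tanh (z / 2 + log t)` and tends to `e^z` as `t → 0` (`exists_net_exp`).
* Exponentials approximate polynomials: `(e^{hs} - 1) / h → s` as `h → 0`. Hence a polynomial of degree
  `< n` in `x` is a limit of linear combinations of the `n` functions `e^{ihx}`, the same for all
  polynomials, and a product of two numbers is a limit of combinations of three exponentials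
  (`exists_net_expRec`).

Both limits are uniform on compact sets because the functions extend continuously to `t = 0` and
`h = 0` (`exists_pos_uniform_approx`). The remaining error comes from replacing `sin (2πkx)`
by its Taylor polynomial of degree `< n`; it is at most `e^{3T - n}` on `[-T, T]`
(`abs_sinPoly_sub_sin_le`), and here `T = 7K`.
-/


open Real

open Topology Filter

/-! ### Exponential activation as a limit of `tanh` activation -/

/-- The rescaled logistic function `e^z / (1 + t² e^z)`: for `t ≠ 0` it is an affine image of a `tanh`
neuron, and for `t = 0` it is the exponential. The parameter enters squared so that the function is
continuous on the whole `(t, z)`-plane. -/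
noncomputable def expNeuron (t z : ℝ) : ℝ := Real.exp z / (1 + t ^ 2 * Real.exp z)

lemma expNeuron_zero (z : ℝ) : expNeuron 0 z = Real.exp z := by
  simp [expNeuron]

lemma continuous_expNeuron {X : Type*} [TopologicalSpace X] {f g : X → ℝ}
    (hf : Continuous f) (hg : Continuous g) : Continuous fun x => expNeuron (f x) (g x) := by
  unfold expNeuron
  refine Continuous.div (by fun_prop) (by fun_prop) fun x => ?_
  positivity

lemma expNeuron_eq_tanh {t : ℝ} (ht : 0 < t) (z : ℝ) :
    expNeuron t z = (2 * t ^ 2)⁻¹ * Real.tanh (z / 2 + Real.log t) + (2 * t ^ 2)⁻¹ := by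
  have h1 : Real.exp (z / 2 + Real.log t) = Real.exp (z / 2) * t := by
    rw [Real.exp_add, Real.exp_log ht]
  have h2 : Real.exp z = Real.exp (z / 2) ^ 2 := by
    rw [← Real.exp_nat_mul]; congr 1; push_cast; ring
  have hp : 0 < Real.exp (z / 2) := Real.exp_pos _
  rw [expNeuron, Real.tanh_eq_sinh_div_cosh, Real.sinh_eq, Real.cosh_eq, Real.exp_neg, h1, h2]
  generalize Real.exp (z / 2) = y at hp
  have : 1 + t ^ 2 * y ^ 2 ≠ 0 := by positivity
  field_simp
  ring

/-- A network with two hidden layers indexed by arbitrary finite types. -/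
lemma exists_net {n : ℕ} {I J : Type*} [Fintype I] [Fintype J]
    (W₁ : I → Fin n → ℝ) (b₁ : I → ℝ) (W₂ : J → I → ℝ) (b₂ : J → ℝ) (w₃ : J → ℝ) (b₃ : ℝ) :
    ∃ net : TanhMLP n 1,
      net.weights = Fintype.card I * n + Fintype.card I +
        (Fintype.card J * Fintype.card I + Fintype.card J + (Fintype.card J + 1)) ∧
      ∀ v, net.eval v 0 = ∑ j, w₃ j * Real.tanh
        (∑ i, W₂ j i * Real.tanh (W₁ i ⬝ᵥ v + b₁ i) + b₂ j) + b₃ := by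
  let e := (Fintype.equivFin I).symm
  let f := (Fintype.equivFin J).symm
  refine ⟨.layer (Matrix.of fun i => W₁ (e i)) (fun i => b₁ (e i))
    (.layer (Matrix.of fun j i => W₂ (f j) (e i)) (fun j => b₂ (f j))
      (.last (Matrix.of fun _ j => w₃ (f j)) (fun _ => b₃))), ?_, fun v => ?_⟩
  · simp [TanhMLP.weights]
  · simp only [TanhMLP.eval, Matrix.mulVec, dotProduct, Matrix.of_apply]
    rw [← f.sum_comp]
    congr 1
    refine Finset.sum_congr rfl fun j _ => ?_
    rw [← e.sum_comp]

/-- Compactness of `S` makes the continuity of `F` at parameter `0` uniform over `S`. -/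
lemma exists_pos_uniform_approx {X : Type*} [TopologicalSpace X] {S : Set X} (hS : IsCompact S)
    (F : ℝ × X → ℝ) (hF : Continuous F) {δ : ℝ} (hδ : 0 < δ) :
    ∃ t > 0, ∀ v ∈ S, |F (t, v) - F (0, v)| ≤ δ := by
  have h : ∀ᶠ t in 𝓝 (0 : ℝ), ∀ v ∈ S, |F (t, v) - F (0, v)| < δ := by
    refine hS.eventually_forall_of_forall_eventually fun v _ => ?_
    have hc : Continuous fun z : ℝ × X => |F (z.1, z.2) - F (0, z.2)| := by fun_prop
    exact hc.continuousAt.eventually_lt continuousAt_const (by simpa using hδ)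
  obtain ⟨t, h1, h2⟩ := ((h.filter_mono nhdsWithin_le_nhds).and
    (self_mem_nhdsWithin : Set.Ioi (0 : ℝ) ∈ 𝓝[>] 0)).exists
  exact ⟨t, h2, fun v hv => (h1 v hv).le⟩

/-- Networks with exponential activation are uniform limits, on compact sets, of `tanh` networks of
the same architecture. -/
lemma exists_net_exp {n : ℕ} {I J : Type*} [Fintype I] [Fintype J]
    (W₁ : I → Fin n → ℝ) (W₂ : J → I → ℝ) (b₂ : J → ℝ) (w₃ : J → ℝ) (b₃ : ℝ)
    {S : Set (Fin n → ℝ)} (hS : IsCompact S) {δ : ℝ} (hδ : 0 < δ) :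
    ∃ net : TanhMLP n 1,
      net.weights = Fintype.card I * n + Fintype.card I +
        (Fintype.card J * Fintype.card I + Fintype.card J + (Fintype.card J + 1)) ∧
      ∀ v ∈ S, |net.eval v 0 - (∑ j, w₃ j * Real.exp
        (∑ i, W₂ j i * Real.exp (W₁ i ⬝ᵥ v) + b₂ j) + b₃)| ≤ δ := by
  obtain ⟨t, ht, h⟩ := exists_pos_uniform_approx hS
    (fun p : ℝ × (Fin n → ℝ) => ∑ j, w₃ j * expNeuron p.1
        (∑ i, W₂ j i * expNeuron p.1 (W₁ i ⬝ᵥ p.2) + b₂ j) + b₃) (by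
      refine Continuous.add (continuous_finsetSum _ fun j _ => continuous_const.mul
        (continuous_expNeuron continuous_fst (Continuous.add (continuous_finsetSum _ fun i _ =>
          continuous_const.mul (continuous_expNeuron continuous_fst ?_))
            continuous_const))) continuous_const
      unfold dotProduct
      fun_prop) hδ
  -- Fold the affine maps relating `expNeuron t` to `tanh` into the affine layers.
  set c := (2 * t ^ 2)⁻¹
  obtain ⟨net, hw, hn⟩ := exists_net (fun i => (2⁻¹ : ℝ) • W₁ i) (fun _ => Real.log t)
    (fun j i => W₂ j i * c / 2) (fun j => (∑ i, W₂ j i * c + b₂ j) / 2 + Real.log t)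
    (fun j => w₃ j * c) (∑ j, w₃ j * c + b₃)
  refine ⟨net, hw, fun v hv => ?_⟩
  have key := h v hv
  simp only [expNeuron_zero] at key
  have inner (j : J) : ∑ i, W₂ j i * c / 2 * Real.tanh (((2⁻¹ : ℝ) • W₁ i) ⬝ᵥ v + Real.log t) +
      ((∑ i, W₂ j i * c + b₂ j) / 2 + Real.log t) =
      (∑ i, W₂ j i * expNeuron t (W₁ i ⬝ᵥ v) + b₂ j) / 2 + Real.log t := by
    rw [← add_assoc, add_div, add_div, Finset.sum_div, Finset.sum_div, ← add_assoc,
      ← Finset.sum_add_distrib]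
    congr 2
    refine Finset.sum_congr rfl fun i _ => ?_
    rw [expNeuron_eq_tanh ht, smul_dotProduct, smul_eq_mul, inv_mul_eq_div]
    ring
  have outer : net.eval v 0 =
      ∑ j, w₃ j * expNeuron t (∑ i, W₂ j i * expNeuron t (W₁ i ⬝ᵥ v) + b₂ j) + b₃ := by
    simp only [hn, inner]
    rw [← add_assoc, ← Finset.sum_add_distrib]
    congr 1
    refine Finset.sum_congr rfl fun j _ => ?_
    rw [expNeuron_eq_tanh ht (_ + b₂ j)]
    ring
  rw [outer]
  exact key

/-! ### Taylor polynomials of the sine -/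

/-- The weight `e ^ (-n)` replaces Stirling's formula: the bound is at most `η` as soon as
`n ≥ 3 * T + log (1 / η)`. -/
lemma exp_sub_sum_le {T : ℝ} (hT : 0 ≤ T) (n : ℕ) :
    Real.exp T - ∑ m ∈ Finset.range n, T ^ m / m.factorial ≤ Real.exp (3 * T - n) := by
  have hs (y : ℝ) : HasSum (fun m : ℕ => y ^ m / m.factorial) (Real.exp y) := by
    rw [Real.exp_eq_exp_ℝ]
    exact NormedSpace.expSeries_div_hasSum_exp y
  -- Compare the tail of the series at `T` with the full series at `e * T`, weighted by `e ^ (-n)`.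
  have h1 := (hasSum_nat_add_iff' n).mpr (hs T)
  have h2 := ((hasSum_nat_add_iff' n).mpr (hs (Real.exp 1 * T))).mul_left (Real.exp (-n))
  have h3 := hasSum_le (fun m => ?_) h1 h2
  · have h4 : 0 ≤ ∑ m ∈ Finset.range n, (Real.exp 1 * T) ^ m / m.factorial :=
      Finset.sum_nonneg fun m _ => by positivity
    have h5 : Real.exp 1 * T ≤ 3 * T :=
      mul_le_mul_of_nonneg_right (Real.exp_one_lt_d9.le.trans (by norm_num)) hT
    calc _ ≤ _ := h3
      _ ≤ Real.exp (-n) * Real.exp (3 * T) := by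
        gcongr
        linarith [Real.exp_le_exp.mpr h5]
      _ = _ := by rw [← Real.exp_add]; congr 1; ring
  · have h6 : (1 : ℝ) ≤ Real.exp (-n) * Real.exp 1 ^ (m + n) := by
      rw [← Real.exp_nat_mul, ← Real.exp_add]
      apply Real.one_le_exp
      push_cast
      linarith [(Nat.cast_nonneg m : (0 : ℝ) ≤ m)]
    rw [mul_pow, mul_div_assoc, ← mul_assoc]
    exact le_mul_of_one_le_left (by positivity) h6

/-- The Taylor polynomial of `sin` at `0` of degree `< n`, read off as the imaginary part of the
exponential series on the imaginary axis. -/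
noncomputable def sinPoly (n : ℕ) : Polynomial ℝ :=
  ∑ m ∈ Finset.range n, Polynomial.C ((Complex.I ^ m).im / m.factorial) * Polynomial.X ^ m

lemma natDegree_sinPoly {n : ℕ} (hn : 0 < n) : (sinPoly n).natDegree < n := by
  refine lt_of_le_of_lt (Polynomial.natDegree_sum_le_of_forall_le (n := n - 1) _ _ fun m hm =>
    (Polynomial.natDegree_C_mul_X_pow_le _ _).trans ?_) (by omega)
  have := Finset.mem_range.mp hm
  omega

lemma abs_sinPoly_sub_sin_le {T y : ℝ} (hy : |y| ≤ T) (n : ℕ) :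
    |(sinPoly n).eval y - Real.sin y| ≤ Real.exp (3 * T - n) := by
  have h := Complex.norm_exp_sub_sum_le_exp_norm_sub_sum (y * Complex.I) n
  have hn : ‖(y : ℂ) * Complex.I‖ = |y| := by simp
  rw [hn] at h
  have him : (Complex.exp (y * Complex.I) -
      ∑ m ∈ Finset.range n, (y * Complex.I) ^ m / m.factorial).im =
      Real.sin y - (sinPoly n).eval y := by
    rw [Complex.sub_im, Complex.exp_ofReal_mul_I_im, Complex.im_sum, sinPoly,
      Polynomial.eval_finsetSum]
    congr 1
    refine Finset.sum_congr rfl fun m _ => ?_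
    rw [mul_pow, ← Complex.ofReal_pow, Complex.div_natCast_im, Complex.im_ofReal_mul]
    simp
    ring
  rw [abs_sub_comm, ← him]
  refine (Complex.abs_im_le_norm _).trans (h.trans ((exp_sub_sum_le (abs_nonneg y) n).trans ?_))
  gcongr

/-! ### Polynomials and products through exponentials -/

/-- The function `(e^y - 1) / y`, with value `1` at `0`. -/
noncomputable def expSlope : ℝ → ℝ := dslope Real.exp 0

lemma continuous_expSlope : Continuous expSlope := by
  rw [← continuousOn_univ]
  exact (continuousOn_dslope Filter.univ_mem).2
    ⟨Real.continuous_exp.continuousOn, Real.differentiableAt_exp⟩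

/-- A finite-difference approximation of the identity, extended continuously to `h = 0`. -/
noncomputable def expId (h s : ℝ) : ℝ := s * expSlope (h * s)

lemma expId_zero (s : ℝ) : expId 0 s = s := by
  simp [expId, expSlope]

lemma expId_of_ne {h : ℝ} (hh : h ≠ 0) (s : ℝ) : expId h s = (Real.exp (h * s) - 1) / h := by
  have := sub_smul_dslope Real.exp 0 (h * s)
  simp only [sub_zero, smul_eq_mul, Real.exp_zero] at this
  rw [eq_div_iff hh, ← this, expId, expSlope]
  ring

lemma continuous_expId {X : Type*} [TopologicalSpace X] {f g : X → ℝ}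
    (hf : Continuous f) (hg : Continuous g) : Continuous fun x => expId (f x) (g x) :=
  hg.mul (continuous_expSlope.comp (hf.mul hg))

/-- The reconstruction map with every identity replaced by `expId h` and every sine by a Taylor
polynomial. It is an exponential network for `h ≠ 0` and equals `∑ a_k * sinPoly (2πk x)` at
`h = 0`. -/
noncomputable def expRec (K n : ℕ) (h : ℝ) (v : Fin (K + 1) → ℝ) : ℝ :=
  ∑ k : Fin K, expId h (expId h (v k.castSucc)) *
    expId h ((sinPoly n).eval (2 * π * (((k : ℕ) : ℝ) + 1) * expId h (v (Fin.last K))))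

lemma continuous_expRec (K n : ℕ) :
    Continuous fun p : ℝ × (Fin (K + 1) → ℝ) => expRec K n p.1 p.2 := by
  unfold expRec
  refine continuous_finsetSum _ fun k _ => Continuous.mul
    (continuous_expId continuous_fst (continuous_expId continuous_fst (by fun_prop)))
    (continuous_expId continuous_fst ((sinPoly n).continuous.comp
      (continuous_const.mul (continuous_expId continuous_fst (by fun_prop)))))

/-- `expRec K n h` is an exponential network, so `exists_net_exp` applies. The first hidden
layer computes the powers `e^{ihx}`, `i < n`, and the numbers `e^{h a_k}`; the second one has three neurons per product, since
`(e^{hα} - 1) (e^{hβ} - 1) = e^{h(α + β)} - e^{hα} - e^{hβ} + 1`. -/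
lemma exists_net_expRec (K : ℕ) {n : ℕ} (hn : 0 < n) {h : ℝ} (hh : h ≠ 0)
    {S : Set (Fin (K + 1) → ℝ)} (hS : IsCompact S) {δ : ℝ} (hδ : 0 < δ) :
    ∃ net : TanhMLP (K + 1) 1,
      net.weights = (n + K) * (K + 1) + (n + K) + (3 * K * (n + K) + 3 * K + (3 * K + 1)) ∧
      ∀ v ∈ S, |net.eval v 0 - expRec K n h v| ≤ δ := by
  -- As a function of `e^{hx}`, the argument of `sinPoly` is `2πk (e^{hx} - 1) / h`.
  let q (k : Fin K) : Polynomial ℝ := (sinPoly n).comp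
    (Polynomial.C (2 * π * (((k : ℕ) : ℝ) + 1) / h) * (Polynomial.X - Polynomial.C 1))
  have hq (k : Fin K) : (q k).natDegree < n := by
    refine lt_of_le_of_lt ?_ (natDegree_sinPoly hn)
    refine Polynomial.natDegree_comp_le.trans ?_
    refine (Nat.mul_le_mul_left _ ((Polynomial.natDegree_C_mul_le _ _).trans
      (Polynomial.natDegree_X_sub_C_le _))).trans (by simp)
  let W₁ : Fin n ⊕ Fin K → Fin (K + 1) → ℝ := Sum.elim
    (fun i => Pi.single (Fin.last K) (i * h)) (fun k => Pi.single k.castSucc h)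
  let α (k : Fin K) : Fin n ⊕ Fin K → ℝ := Sum.elim (fun _ => 0) (Pi.single k 1)
  let β (k : Fin K) : Fin n ⊕ Fin K → ℝ := Sum.elim (fun i => h * (q k).coeff i) (fun _ => 0)
  let W₂ : Fin K ⊕ Fin K ⊕ Fin K → Fin n ⊕ Fin K → ℝ :=
    Sum.elim (fun k => α k + β k) (Sum.elim α β)
  let b₂ : Fin K ⊕ Fin K ⊕ Fin K → ℝ :=
    Sum.elim (fun _ => -1) (Sum.elim (fun _ => -1) (fun _ => 0))
  let w₃ : Fin K ⊕ Fin K ⊕ Fin K → ℝ :=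
    Sum.elim (fun _ => (h ^ 2)⁻¹) (Sum.elim (fun _ => -(h ^ 2)⁻¹) (fun _ => -(h ^ 2)⁻¹))
  obtain ⟨net, hw, hnet⟩ := exists_net_exp W₁ W₂ b₂ w₃ (∑ _k : Fin K, (h ^ 2)⁻¹) hS hδ
  refine ⟨net, ?_, fun v hv => ?_⟩
  · rw [hw]
    simp only [Fintype.card_sum, Fintype.card_fin]
    ring
  convert hnet v hv using 3
  have hα (k : Fin K) : ∑ i, α k i * Real.exp (W₁ i ⬝ᵥ v) = h * expId h (v k.castSucc) + 1 := by
    rw [expId_of_ne hh, mul_div_cancel₀ _ hh]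
    simp [α, W₁, Fintype.sum_sum_type, Pi.single_apply]
  have hβ (k : Fin K) : ∑ i, β k i * Real.exp (W₁ i ⬝ᵥ v) =
      h * (sinPoly n).eval (2 * π * (((k : ℕ) : ℝ) + 1) * expId h (v (Fin.last K))) := by
    have h1 : (sinPoly n).eval (2 * π * (((k : ℕ) : ℝ) + 1) * expId h (v (Fin.last K))) =
        (q k).eval (Real.exp (h * v (Fin.last K))) := by
      simp only [q, Polynomial.eval_comp, expId_of_ne hh]
      congr 1
      simp
      ring
    rw [h1, Polynomial.eval_eq_sum_range' (hq k), Finset.sum_range, Finset.mul_sum]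
    simp only [β, W₁, Fintype.sum_sum_type, Sum.elim_inl, Sum.elim_inr, zero_mul,
      Finset.sum_const_zero, add_zero, single_dotProduct]
    refine Finset.sum_congr rfl fun i _ => ?_
    rw [mul_assoc, ← Real.exp_nat_mul, mul_assoc]
  have hαβ (k : Fin K) : ∑ i, (α k + β k) i * Real.exp (W₁ i ⬝ᵥ v) =
      ∑ i, α k i * Real.exp (W₁ i ⬝ᵥ v) + ∑ i, β k i * Real.exp (W₁ i ⬝ᵥ v) := by
    simp only [Pi.add_apply, add_mul, Finset.sum_add_distrib]
  simp only [Fintype.sum_sum_type (α₁ := Fin K), W₂, b₂, w₃, Sum.elim_inl, Sum.elim_inr, hαβ, hα, hβ]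
  rw [expRec, ← Finset.sum_add_distrib, ← Finset.sum_add_distrib, ← Finset.sum_add_distrib]
  refine Finset.sum_congr rfl fun k _ => ?_
  rw [expId_of_ne hh (expId _ _), expId_of_ne hh (Polynomial.eval _ _)]
  generalize expId h (v k.castSucc) = y
  generalize Polynomial.eval (_ : ℝ) (sinPoly n) = z
  rw [show h * y + 1 + h * z + -1 = h * y + h * z by ring, show h * y + 1 + -1 = h * y by ring,
    add_zero, Real.exp_add]
  field_simp
  ring

/-! ### Choice of the degree and weight count -/

/-- For every `A > 0` there is a constant `C > 0` such that for every `K ≥ 1` and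
`0 < ε < 1` there is a tanh-MLP network `R̃ : ℝ^{K+1} → ℝ` with at most
`C (K² + K log²(K/ε))` weights satisfying
`|R̃(a₁,…,a_K,x) − Σ_{k=1}^K a_k sin(2πkx)| ≤ ε` for all `a_k ∈ [−A,A]`, `x ∈ [0,1]`. -/
theorem reconstruction_block_approximation (A : ℝ) (hA : 0 < A) :
    ∃ C : ℝ, 0 < C ∧
      ∀ K : ℕ, 1 ≤ K → ∀ ε : ℝ, 0 < ε → ε < 1 →
        ∃ net : TanhMLP (K + 1) 1,
          (net.weights : ℝ) ≤ C * ((K : ℝ) ^ 2 + (K : ℝ) * (Real.log ((K : ℝ) / ε)) ^ 2) ∧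
          ∀ a : Fin K → ℝ, (∀ k, a k ∈ Set.Icc (-A) A) →
            ∀ x ∈ Set.Icc (0 : ℝ) 1,
              |net.eval (Fin.snoc a x) 0 -
                ∑ k : Fin K, a k * Real.sin (2 * π * (((k : ℕ) : ℝ) + 1) * x)| ≤ ε := by
  set D := |Real.log (3 * A)|
  have hD : 0 ≤ D := abs_nonneg _
  refine ⟨6 * (24 + D) + 7, by positivity, fun K hK ε hε hε1 => ?_⟩
  have hK1 : (1 : ℝ) ≤ K := by exact_mod_cast hK
  have hK0 : (0 : ℝ) < K := by linarith
  set L := Real.log (K / ε) with hL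
  have hL0 : 0 ≤ L := Real.log_nonneg (by rw [le_div_iff₀ hε]; linarith)
  -- `21 * K = 3 * T` for `T = 7 * K ≥ 2 * π * K`, and `D + L ≥ log (3 * A * K / ε)`, so that every
  -- Taylor polynomial has error at most `ε / (3 * A * K)`.
  set n := ⌈21 * (K : ℝ) + D + L⌉₊ with hn
  have hn1 : 21 * (K : ℝ) + D + L ≤ n := Nat.le_ceil _
  have hn2 : (n : ℝ) < 21 * (K : ℝ) + D + L + 1 := Nat.ceil_lt_add_one (by positivity)
  have hn0 : 0 < n := by
    have : (0 : ℝ) < n := by linarith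
    exact_mod_cast this
  -- The bound `A + 1` covers both the range of the `a k` and that of `x`.
  let S : Set (Fin (K + 1) → ℝ) := Set.Icc (fun _ => -(A + 1)) (fun _ => A + 1)
  have hS : IsCompact S := isCompact_Icc
  have hε3 : 0 < ε / 3 := by positivity
  obtain ⟨h, hh, hrec⟩ := exists_pos_uniform_approx hS _ (continuous_expRec K n) hε3
  obtain ⟨net, hw, hnet⟩ := exists_net_expRec K hn0 hh.ne' hS hε3
  refine ⟨net, ?_, fun a ha x hx => ?_⟩
  · rw [hw]
    push_cast
    -- There are `(n + K) * (4 * K + 2) + 6 * K + 1` weights.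
    have e1 : (n : ℝ) + K ≤ (23 + D) * K + L := by nlinarith
    have e2 : (K : ℝ) * L ≤ K * (1 + L ^ 2) := by
      gcongr
      nlinarith [sq_nonneg (L - 1)]
    have e3 : (6 * K : ℝ) * (n + K) ≤ 6 * K * ((23 + D) * K + L) := by gcongr
    have e4 : (2 : ℝ) * (n + K) ≤ 2 * K * (n + K) := by
      gcongr
      linarith
    have e5 : (K : ℝ) ≤ K ^ 2 := by nlinarith
    have e6 : 0 ≤ (K : ℝ) * L ^ 2 := by positivity
    nlinarith [mul_nonneg hD e6]
  · have hv : (Fin.snoc a x : Fin (K + 1) → ℝ) ∈ S := by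
      refine ⟨fun i => ?_, fun i => ?_⟩ <;> refine Fin.lastCases ?_ (fun k => ?_) i
      · simp only [Fin.snoc_last]; linarith [hx.1]
      · simp only [Fin.snoc_castSucc]; linarith [(ha k).1]
      · simp only [Fin.snoc_last]; linarith [hx.2]
      · simp only [Fin.snoc_castSucc]; linarith [(ha k).2]
    have b1 := hnet _ hv
    have b2 := hrec _ hv
    simp only at b2
    set R : ℝ := ∑ k : Fin K, a k * Real.sin (2 * π * (((k : ℕ) : ℝ) + 1) * x)
    have hpt (k : Fin K) : |(sinPoly n).eval (2 * π * (((k : ℕ) : ℝ) + 1) * x) -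
        Real.sin (2 * π * (((k : ℕ) : ℝ) + 1) * x)| ≤ ε / (3 * A * K) := by
      have hkK : ((k : ℕ) : ℝ) + 1 ≤ K := by exact_mod_cast k.2
      have hk0 : (0 : ℝ) ≤ 2 * π * (((k : ℕ) : ℝ) + 1) := by positivity
      have hy : |2 * π * (((k : ℕ) : ℝ) + 1) * x| ≤ 7 * K := by
        rw [abs_of_nonneg (mul_nonneg hk0 hx.1)]
        have : 2 * π ≤ 7 := by linarith [Real.pi_lt_d2]
        calc _ ≤ 2 * π * (((k : ℕ) : ℝ) + 1) * 1 := by gcongr; exact hx.2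
          _ = 2 * π * (((k : ℕ) : ℝ) + 1) := mul_one _
          _ ≤ 7 * K := by gcongr
      refine (abs_sinPoly_sub_sin_le hy n).trans ?_
      have hlog : Real.log (ε / (3 * A * K)) = -(Real.log (3 * A) + L) := by
        rw [hL, ← Real.log_mul (by positivity) (by positivity), ← Real.log_inv]
        congr 1
        field_simp
      rw [← Real.le_log_iff_exp_le (by positivity), hlog]
      linarith [le_abs_self (Real.log (3 * A))]
    have b3 : |expRec K n 0 (Fin.snoc a x) - R| ≤ ε / 3 := by
      simp only [expRec, expId_zero, Fin.snoc_castSucc, Fin.snoc_last, R]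
      rw [← Finset.sum_sub_distrib]
      refine (Finset.abs_sum_le_sum_abs _ _).trans ?_
      calc _ ≤ ∑ _k : Fin K, A * (ε / (3 * A * K)) := by
            refine Finset.sum_le_sum fun k _ => ?_
            rw [← mul_sub, abs_mul]
            exact mul_le_mul (abs_le.2 (ha k)) (hpt k) (abs_nonneg _) hA.le
        _ = ε / 3 := by
            rw [Finset.sum_const, Finset.card_univ, Fintype.card_fin, nsmul_eq_mul]
            field_simp
    rw [abs_le] at *
    constructor <;> linarith [b1.1, b1.2, b2.1, b2.2, b3.1, b3.2]
end
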